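/- Hook length formula at roots of unity: for a partition λ ∈ Sh(d,c) and ζ = exp(2πi/n) with n = c+d, the Schur polynomial evaluated at the centered tuple ζ^{I_0} = (ζ^{-(d-1)/2},...,ζ^{(d-1)/2}) equals S_λ(ζ^{I_0}) = ∏_{(i,j)∈λ} sin((d-i+j)π/n) / ∏_{(i,j)∈λ} sin(hl(i,j)·π/n), where hl(i,j) = λ_i + λ^t_j - i - j + 1 is the hook length of the box (i,j). -/

import Mathlib

noncomputable section

/-- Complete homogeneous symmetric polynomial of degree `m` in `d` variables. -/
def Hpoly (d m : ℕ) (z : Fin d → ℂ) : ℂ :=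
  ∑ α ∈ Finset.Nat.antidiagonalTuple d m, ∏ i, z i ^ α i

/-- `H_k` for integer index `k` (zero for negative `k`). -/
def HZ (d : ℕ) (z : Fin d → ℂ) (k : ℤ) : ℂ :=
  if 0 ≤ k then Hpoly d k.toNat z else 0

/-- Schur polynomial via the Jacobi–Trudi determinant `det(H_{λ_i - i + j})`. -/
def schur (d : ℕ) (lam : Fin d → ℕ) (z : Fin d → ℂ) : ℂ :=
  Matrix.det (Matrix.of fun i j : Fin d => HZ d z ((lam i : ℤ) + j - i))

/-- The partitions fitting in a `d × c` box, as weakly decreasing functions. -/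
def box (d c : ℕ) : Finset (Fin d → Fin (c + 1)) :=
  Finset.univ.filter fun lam => ∀ i j : Fin d, i ≤ j → lam j ≤ lam i

/-- The conjugate (transpose) partition. -/
def conjPart (d c : ℕ) (lam : Fin d → ℕ) : Fin c → ℕ :=
  fun j => (Finset.univ.filter fun i : Fin d => (j : ℕ) < lam i).card

/-- The boxes `(i,j)` (0-indexed) of the Young diagram of `lam` inside the `d × c` box. -/
def cells (d c : ℕ) (lam : Fin d → ℕ) : Finset (Fin d × Fin c) :=
  Finset.univ.filter fun p => (p.2 : ℕ) < lam p.1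

/-- The hook length of the (0-indexed) box `(i,j)`:
`hl(i,j) = λ_i + λᵗ_j - i - j - 1` (which is `λ_i + λᵗ_j - i - j + 1` 1-indexed). -/
def hookLen (d c : ℕ) (lam : Fin d → ℕ) (p : Fin d × Fin c) : ℕ :=
  lam p.1 + conjPart d c lam p.2 - (p.1 + p.2 + 1)

/-- The centered tuple `ζ^{I_0} = (ζ^{-(d-1)/2}, …, ζ^{(d-1)/2})`, `ζ^m = exp(2πi·m/n)`. -/
def zI0 (d n : ℕ) : Fin d → ℂ := fun k =>
  Complex.exp (Real.pi * Complex.I * (2 * (k : ℂ) - ((d : ℂ) - 1)) / n)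


/-! Write `β_i = λ_i + d - 1 - i` and `z_k = exp (i (2k - (d - 1)) θ)`. The Jacobi–Trudi determinant
is the quotient of the alternants `det (z_k ^ β_i)` and `det (z_k ^ (d - 1 - i))`. At the centered
tuple each of these is a Vandermonde determinant in the other variable, so it is a constant times
`∏_{i < k} sin ((β_i - β_k) θ)`. In row `i`, the hook lengths and the differences `β_i - β_k`
together exhaust `1, …, β_i`, and so do the numbers `d + j - i` and the differences `k - i`;
comparing the two factorisations row by row gives
`s_λ · ∏ sin (hl θ) = ∏ sin ((d - i + j) θ)` as soon as the second alternant does not vanish, which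
is the case for all but countably many `θ : ℂ`, and hence for every `θ` by continuity. -/

section CompleteHomogeneous

lemma sum_antidiagonalTuple_succ {M : Type*} [AddCommMonoid M] (d m : ℕ)
    (f : (Fin (d + 1) → ℕ) → M) :
    ∑ α ∈ Finset.Nat.antidiagonalTuple (d + 1) m, f α =
      ∑ p ∈ Finset.HasAntidiagonal.antidiagonal m, ∑ β ∈ Finset.Nat.antidiagonalTuple d p.2,
        f (Fin.cons p.1 β) := by
  rw [Finset.sum_sigma']
  refine Finset.sum_bij' (fun α _ => ⟨(α 0, ∑ i, Fin.tail α i), Fin.tail α⟩)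
    (fun x _ => Fin.cons x.1.1 x.2) ?_ ?_ ?_ ?_ ?_ <;>
  simp +contextual [Finset.Nat.mem_antidiagonalTuple, Fin.sum_univ_succ, Fin.tail]

lemma Hpoly_zero_right (d : ℕ) (z : Fin d → ℂ) : Hpoly d 0 z = 1 := by
  simp [Hpoly, Finset.Nat.antidiagonalTuple_zero_right]

lemma Hpoly_succ_left (d m : ℕ) (z : Fin (d + 1) → ℂ) :
    Hpoly (d + 1) m z =
      ∑ p ∈ Finset.HasAntidiagonal.antidiagonal m, z 0 ^ p.1 * Hpoly d p.2 (Fin.tail z) := by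
  simp [Hpoly, sum_antidiagonalTuple_succ, Fin.prod_univ_succ, Finset.mul_sum, Fin.tail]

lemma Hpoly_succ_succ (d m : ℕ) (z : Fin (d + 1) → ℂ) :
    Hpoly (d + 1) (m + 1) z = z 0 * Hpoly (d + 1) m z + Hpoly d (m + 1) (Fin.tail z) := by
  rw [Hpoly_succ_left, Hpoly_succ_left, Finset.Nat.sum_antidiagonal_succ, Finset.mul_sum, add_comm]
  simp [pow_succ', mul_assoc]

lemma HZ_natCast (d m : ℕ) (z : Fin d → ℂ) : HZ d z m = Hpoly d m z := by
  simp [HZ]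

lemma HZ_of_neg {d : ℕ} {z : Fin d → ℂ} {k : ℤ} (hk : k < 0) : HZ d z k = 0 :=
  if_neg hk.not_ge

lemma HZ_succ_add_one (d : ℕ) (z : Fin (d + 1) → ℂ) (k : ℤ) :
    HZ (d + 1) z (k + 1) = z 0 * HZ (d + 1) z k + HZ d (Fin.tail z) (k + 1) := by
  rcases lt_trichotomy k (-1) with hk | rfl | hk
  · rw [HZ_of_neg (by lia), HZ_of_neg (by lia), HZ_of_neg (by lia), mul_zero, add_zero]
  · simp [HZ, Hpoly_zero_right]
  · lift k to ℕ using by lia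
    exact_mod_cast Hpoly_succ_succ d k z

-- Explicitly `K k = ∏ l ≠ k, (z k - z l)⁻¹`, by partial fractions of `∏ k, (1 - z k T)⁻¹`.
lemma exists_HZ_eq_sum_mul_pow (d : ℕ) (z : Fin d → ℂ) (hz : Function.Injective z) :
    ∃ K : Fin d → ℂ, ∀ a : ℕ, HZ d z ((a : ℤ) - d + 1) = ∑ k, K k * z k ^ a := by
  induction d with
  | zero => exact ⟨0, fun a => by simpa [Hpoly] using HZ_natCast 0 (a + 1) z⟩
  | succ d ih =>
    obtain ⟨K, hK⟩ := ih (Fin.tail z) (hz.comp (Fin.succ_injective d))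
    let K' : Fin d → ℂ := fun k => K k / (z k.succ - z 0)
    refine ⟨Fin.cons (HZ (d + 1) z (-d) - ∑ k, K' k) K', fun a => ?_⟩
    simp only [Fin.sum_univ_succ, Fin.cons_zero, Fin.cons_succ]
    induction a with
    | zero => simp
    | succ a iha =>
      have hK' (k : Fin d) : K k = K' k * (z k.succ - z 0) :=
        (div_mul_cancel₀ _ (sub_ne_zero.2 (hz.ne k.succ_ne_zero))).symm
      have hrec := HZ_succ_add_one d z ((a : ℤ) - (d + 1 : ℕ) + 1)
      rw [iha, show (a : ℤ) - (d + 1 : ℕ) + 1 + 1 = a - d + 1 by push_cast; ring, hK] at hrec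
      rw [show ((a + 1 : ℕ) : ℤ) - (d + 1 : ℕ) + 1 = a - d + 1 by push_cast; ring, hrec, mul_add,
        add_assoc, Finset.mul_sum, ← Finset.sum_add_distrib]
      congr 1
      · ring
      · refine Finset.sum_congr rfl fun k _ => ?_
        rw [hK', Fin.tail]
        ring

end CompleteHomogeneous

section Bialternant

/-- The beta numbers `β_i = λ_i + d - 1 - i` (`i` counted from `0`) of a partition `λ` with at most
`d` parts: the exponents of the alternant in the numerator of the bialternant formula. The
truncated subtraction is harmless since `i < d`. -/
def betaNumber (d : ℕ) (lam : Fin d → ℕ) (i : Fin d) : ℕ :=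
  lam i + (d - 1 - i)

/-- The alternant `det (z_k ^ a_i)`. -/
def alternant {R : Type*} [CommRing R] {d : ℕ} (a : Fin d → ℕ) (z : Fin d → R) : R :=
  Matrix.det (Matrix.of fun i k => z k ^ a i)

lemma alternant_eq_zero_of_not_injective {R : Type*} [CommRing R] {d : ℕ} (a : Fin d → ℕ)
    {z : Fin d → R} (hz : ¬ Function.Injective z) : alternant a z = 0 := by
  obtain ⟨k, l, hkl, hne⟩ := Function.not_injective_iff.1 hz
  exact Matrix.det_zero_of_column_eq hne fun i => by simp [hkl]

lemma schur_zero (d : ℕ) (z : Fin d → ℂ) : schur d 0 z = 1 := by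
  rw [schur, Matrix.det_of_isUpperTriangular]
  · simp [HZ, Hpoly_zero_right]
  · intro i j (hji : j < i)
    exact HZ_of_neg (by simpa using hji)

lemma exists_schur_eq_alternant_mul (d : ℕ) (z : Fin d → ℂ) (hz : Function.Injective z) :
    ∃ C : ℂ, ∀ lam : Fin d → ℕ, schur d lam z = alternant (betaNumber d lam) z * C := by
  obtain ⟨K, hK⟩ := exists_HZ_eq_sum_mul_pow d z hz
  refine ⟨Matrix.det (Matrix.of fun k j : Fin d => K k * z k ^ (j : ℕ)), fun lam => ?_⟩
  rw [alternant, ← Matrix.det_mul, schur]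
  congr 1
  ext i j
  have hindex : (lam i : ℤ) + j - i = (betaNumber d lam i + j : ℕ) - d + 1 := by
    have := i.isLt
    simp only [betaNumber]
    lia
  simp only [Matrix.of_apply, Matrix.mul_apply]
  rw [hindex, hK]
  refine Finset.sum_congr rfl fun k _ => ?_
  ring

theorem schur_mul_alternant (d : ℕ) (lam : Fin d → ℕ) (z : Fin d → ℂ) :
    schur d lam z * alternant (betaNumber d 0) z = alternant (betaNumber d lam) z := by
  by_cases hz : Function.Injective z
  · obtain ⟨C, hC⟩ := exists_schur_eq_alternant_mul d z hz
    have hone : alternant (betaNumber d 0) z * C = 1 := by rw [← hC, schur_zero]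
    rw [hC, mul_assoc, mul_comm C, hone, mul_one]
  · simp [alternant_eq_zero_of_not_injective _ hz]

end Bialternant

section CenteredTuple

/-- The centered tuple `exp (i (2k - (d - 1)) θ)`, `0 ≤ k < d`, at a complex angle `θ`; the tuple
`ζ^{I_0}` is the case `θ = π / n`. -/
def centeredExp (d : ℕ) (θ : ℂ) : Fin d → ℂ := fun k =>
  Complex.exp ((2 * k - (d - 1)) * θ * Complex.I)

lemma zI0_eq_centeredExp (d n : ℕ) : zI0 d n = centeredExp d (Real.pi / n) := by
  funext k
  simp only [zI0, centeredExp]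
  congr 1
  ring

lemma prod_prod_Ioi_mul {M : Type*} [CommMonoid M] {d : ℕ} (x : Fin d → M) :
    ∏ i, ∏ j ∈ Finset.Ioi i, x j * x i = ∏ i, x i ^ (d - 1) := by
  rw [Finset.prod_prod_Ioi_mul_eq_prod_prod_off_diag (fun j _ => x j),
    Finset.prod_comm' (t' := Finset.univ) (s' := fun i => {i}ᶜ) (by simp [eq_comm])]
  simp [Finset.card_compl]

lemma exp_sq_sub_exp_sq (u v : ℂ) :
    Complex.exp (v * Complex.I) ^ 2 - Complex.exp (u * Complex.I) ^ 2 =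
      Complex.exp (v * Complex.I) * Complex.exp (u * Complex.I) *
        (-2 * Complex.I * Complex.sin (u - v)) := by
  have hv := Complex.exp_ne_zero (v * Complex.I)
  rw [Complex.sin, neg_sub, sub_mul v, sub_mul u, Complex.exp_sub, Complex.exp_sub]
  field_simp
  rw [Complex.I_sq]
  ring

lemma alternant_centeredExp {d : ℕ} (a : Fin d → ℕ) (θ : ℂ) :
    alternant a (centeredExp d θ) =
      ∏ i, ∏ j ∈ Finset.Ioi i, -2 * Complex.I * Complex.sin (((a i : ℂ) - a j) * θ) := by
  let x : Fin d → ℂ := fun i => Complex.exp (a i * θ * Complex.I)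
  have hentry (i k : Fin d) :
      centeredExp d θ k ^ a i = (x i)⁻¹ ^ (d - 1) * Matrix.vandermonde (fun i => x i ^ 2) i k := by
    have hd : ((d - 1 : ℕ) : ℂ) = d - 1 := Nat.cast_pred k.pos
    simp only [Matrix.vandermonde_apply, centeredExp, x, ← Complex.exp_neg, ← Complex.exp_nat_mul,
      ← Complex.exp_add, hd]
    congr 1
    push_cast
    ring
  have hvandermonde : ∏ i, ∏ j ∈ Finset.Ioi i, (x j ^ 2 - x i ^ 2) =
      (∏ i, x i ^ (d - 1)) *
        ∏ i, ∏ j ∈ Finset.Ioi i, -2 * Complex.I * Complex.sin (((a i : ℂ) - a j) * θ) := by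
    simp only [← prod_prod_Ioi_mul, ← Finset.prod_mul_distrib, x, exp_sq_sub_exp_sq, sub_mul]
  have hcancel : (∏ i, (x i)⁻¹ ^ (d - 1)) * ∏ i, x i ^ (d - 1) = 1 := by
    rw [← Finset.prod_mul_distrib]
    exact Finset.prod_eq_one fun i _ => by
      rw [← mul_pow, inv_mul_cancel₀ (Complex.exp_ne_zero _), one_pow]
  simp only [alternant, hentry]
  rw [Matrix.det_mul_column, Matrix.det_vandermonde, hvandermonde, ← mul_assoc, hcancel, one_mul]

lemma alternant_centeredExp_of_antitone {d : ℕ} {a : Fin d → ℕ} (ha : Antitone a) (θ : ℂ) :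
    alternant a (centeredExp d θ) =
      (∏ i : Fin d, ∏ _j ∈ Finset.Ioi i, -2 * Complex.I) *
        ∏ i, ∏ j ∈ Finset.Ioi i, Complex.sin ((a i - a j : ℕ) * θ) := by
  simp only [alternant_centeredExp, ← Finset.prod_mul_distrib]
  refine Finset.prod_congr rfl fun i _ => Finset.prod_congr rfl fun j hj => ?_
  rw [Nat.cast_sub (ha (Finset.mem_Ioi.1 hj).le)]

end CenteredTuple

section Hooks

variable {d c : ℕ} {lam : Fin d → ℕ}

lemma betaNumber_strictAnti (hlam : Antitone lam) : StrictAnti (betaNumber d lam) := by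
  intro i k hik
  have := hlam hik.le
  simp only [betaNumber]
  lia

lemma lt_conjPart_iff (hlam : Antitone lam) (k : Fin d) (j : Fin c) :
    (k : ℕ) < conjPart d c lam j ↔ (j : ℕ) < lam k := by
  constructor
  · contrapose!
    intro hj
    have hsub : ({i | (j : ℕ) < lam i} : Finset (Fin d)) ⊆ Finset.Iio k := by
      intro i hi
      rw [Finset.mem_filter_univ] at hi
      exact Finset.mem_Iio.2 (hlam.reflect_lt (hj.trans_lt hi))
    exact (Finset.card_le_card hsub).trans_eq (Fin.card_Iio k)
  · intro hj
    have hsub : Finset.Iic k ⊆ ({i | (j : ℕ) < lam i} : Finset (Fin d)) := fun i hi =>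
      (Finset.mem_filter_univ i).2 (hj.trans_le (hlam (Finset.mem_Iic.1 hi)))
    exact Nat.succ_le_iff.1 ((Fin.card_Iic k).symm.trans_le (Finset.card_le_card hsub))

lemma conjPart_antitone (d c : ℕ) (lam : Fin d → ℕ) : Antitone (conjPart d c lam) :=
  fun _ _ hjk => Finset.card_le_card <| Finset.monotone_filter_right _ fun _ _ hi =>
    (Fin.le_def.1 hjk).trans_lt hi

lemma conjPart_le (d c : ℕ) (lam : Fin d → ℕ) (j : Fin c) : conjPart d c lam j ≤ d :=
  (Finset.card_le_univ _).trans_eq (Fintype.card_fin d)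

lemma hookLen_mem_Ioc (hlam : Antitone lam) {i : Fin d} {j : Fin c} (hj : (j : ℕ) < lam i) :
    hookLen d c lam (i, j) ∈ Finset.Ioc 0 (betaNumber d lam i) := by
  have := (lt_conjPart_iff hlam i j).2 hj
  have := conjPart_le d c lam j
  simp only [hookLen, betaNumber, Finset.mem_Ioc]
  lia

lemma hookLen_strictAntiOn_row (hlam : Antitone lam) (i : Fin d) :
    StrictAntiOn (fun j : Fin c => hookLen d c lam (i, j)) {j | (j : ℕ) < lam i} := by
  intro j hj k hk hjk
  have := (lt_conjPart_iff hlam i k).2 hk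
  have := conjPart_antitone d c lam hjk.le
  simp only [hookLen, Set.mem_ofPred_eq] at hj hk ⊢
  lia

lemma betaNumber_sub_mem_Ioc (hlam : Antitone lam) {i k : Fin d} (hik : i < k) :
    betaNumber d lam i - betaNumber d lam k ∈ Finset.Ioc 0 (betaNumber d lam i) := by
  have := betaNumber_strictAnti hlam hik
  simp only [Finset.mem_Ioc]
  lia

lemma betaNumber_sub_injOn (hlam : Antitone lam) (i : Fin d) :
    Set.InjOn (fun k => betaNumber d lam i - betaNumber d lam k) (Set.Ioi i) := by
  intro k (hk : i < k) l (hl : i < l) hkl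
  have := betaNumber_strictAnti hlam hk
  have := betaNumber_strictAnti hlam hl
  exact (betaNumber_strictAnti hlam).injective (by simp only at hkl; lia)

-- If `j < λ_k` then the hook of `(i, j)` reaches row `k` and is longer than `β_i - β_k`;
-- otherwise it is shorter.
lemma hookLen_ne_betaNumber_sub (hlam : Antitone lam) {i k : Fin d} {j : Fin c}
    (hj : (j : ℕ) < lam i) (hik : i < k) :
    hookLen d c lam (i, j) ≠ betaNumber d lam i - betaNumber d lam k := by
  have := hlam hik.le
  have := (lt_conjPart_iff hlam i j).2 hj
  have := lt_conjPart_iff hlam k j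
  simp only [hookLen, betaNumber]
  lia

lemma prod_hookLen_row_mul_prod_betaNumber_sub {M : Type*} [CommMonoid M] (s : ℕ → M)
    (hlam : Antitone lam) (i : Fin d) (hc : lam i ≤ c) :
    (∏ j : Fin c with j.val < lam i, s (hookLen d c lam (i, j))) *
      ∏ k ∈ Finset.Ioi i, s (betaNumber d lam i - betaNumber d lam k) =
    ∏ m ∈ Finset.Ioc 0 (betaNumber d lam i), s m := by
  let hooks := ({j | (j : ℕ) < lam i} : Finset (Fin c)).image fun j => hookLen d c lam (i, j)
  let gaps := (Finset.Ioi i).image fun k => betaNumber d lam i - betaNumber d lam k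
  have hhooks : Set.InjOn (fun j : Fin c => hookLen d c lam (i, j))
      ({j | (j : ℕ) < lam i} : Finset (Fin c)) := by
    simpa using (hookLen_strictAntiOn_row hlam i).injOn
  have hgaps : Set.InjOn (fun k => betaNumber d lam i - betaNumber d lam k)
      (Finset.Ioi i : Finset (Fin d)) := by
    simpa using betaNumber_sub_injOn hlam i
  have hdisj : Disjoint hooks gaps := by
    refine Finset.disjoint_left.2 fun m hm hm' => ?_
    obtain ⟨j, hj, rfl⟩ := Finset.mem_image.1 hm
    obtain ⟨k, hk, hjk⟩ := Finset.mem_image.1 hm'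
    exact hookLen_ne_betaNumber_sub hlam ((Finset.mem_filter_univ j).1 hj) (Finset.mem_Ioi.1 hk)
      hjk.symm
  have hunion : hooks ∪ gaps = Finset.Ioc 0 (betaNumber d lam i) := by
    refine Finset.eq_of_subset_of_card_le (Finset.union_subset ?_ ?_) ?_
    · exact Finset.image_subset_iff.2 fun j hj =>
        hookLen_mem_Ioc hlam ((Finset.mem_filter_univ j).1 hj)
    · exact Finset.image_subset_iff.2 fun k hk =>
        betaNumber_sub_mem_Ioc hlam (Finset.mem_Ioi.1 hk)
    · rw [Finset.card_union_of_disjoint hdisj, Finset.card_image_of_injOn hhooks,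
        Finset.card_image_of_injOn hgaps, Fin.card_filter_val_lt, min_eq_right hc, Fin.card_Ioi,
        Nat.card_Ioc, betaNumber, Nat.sub_zero]
  rw [← hunion, Finset.prod_union hdisj, Finset.prod_image hhooks, Finset.prod_image hgaps]

lemma prod_content_row_eq_prod_Ioc {M : Type*} [CommMonoid M] (s : ℕ → M) (i : Fin d)
    (hc : lam i ≤ c) :
    ∏ j : Fin c with j.val < lam i, s (d + j - i) =
      ∏ m ∈ Finset.Ioc (betaNumber d 0 i) (betaNumber d lam i), s m := by
  refine Finset.prod_nbij (fun j => d + j - i) ?_ ?_ ?_ fun _ _ => rfl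
  · intro j hj
    simp only [Finset.mem_filter_univ, Finset.mem_Ioc, betaNumber, Pi.zero_apply] at hj ⊢
    lia
  · intro j _ k _ hjk
    simp only at hjk
    lia
  · intro m hm
    simp only [Finset.coe_Ioc, Set.mem_Ioc, betaNumber, Pi.zero_apply] at hm
    refine ⟨⟨m + i - d, by lia⟩, ?_, ?_⟩ <;> simp <;> lia

lemma prod_content_row_mul_prod_betaNumber_sub {M : Type*} [CommMonoid M] (s : ℕ → M)
    (i : Fin d) (hc : lam i ≤ c) :
    (∏ j : Fin c with j.val < lam i, s (d + j - i)) *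
      ∏ k ∈ Finset.Ioi i, s (betaNumber d 0 i - betaNumber d 0 k) =
    ∏ m ∈ Finset.Ioc 0 (betaNumber d lam i), s m := by
  have hempty := prod_hookLen_row_mul_prod_betaNumber_sub (lam := 0) s antitone_const i c.zero_le
  simp only [Pi.zero_apply, Nat.not_lt_zero, Finset.filter_false, Finset.prod_empty,
    one_mul] at hempty
  rw [hempty, prod_content_row_eq_prod_Ioc s i hc, mul_comm,
    Finset.prod_Ioc_consecutive _ (Nat.zero_le _)]
  simp [betaNumber]

lemma prod_cells {M : Type*} [CommMonoid M] (d c : ℕ) (lam : Fin d → ℕ) (f : Fin d × Fin c → M) :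
    ∏ p ∈ cells d c lam, f p = ∏ i, ∏ j : Fin c with j.val < lam i, f (i, j) := by
  simp only [cells, Finset.prod_filter, Fintype.prod_prod_type]

theorem prod_hookLen_mul_prod_betaNumber_sub {M : Type*} [CommMonoid M] (s : ℕ → M)
    (hlam : Antitone lam) (hc : ∀ i, lam i ≤ c) :
    (∏ p ∈ cells d c lam, s (hookLen d c lam p)) *
      ∏ i, ∏ k ∈ Finset.Ioi i, s (betaNumber d lam i - betaNumber d lam k) =
    (∏ p ∈ cells d c lam, s (d + p.2 - p.1)) *
      ∏ i, ∏ k ∈ Finset.Ioi i, s (betaNumber d 0 i - betaNumber d 0 k) := by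
  simp only [prod_cells, ← Finset.prod_mul_distrib]
  refine Finset.prod_congr rfl fun i _ => ?_
  rw [prod_hookLen_row_mul_prod_betaNumber_sub s hlam i (hc i),
    prod_content_row_mul_prod_betaNumber_sub s i (hc i)]

end Hooks

section HookContent

variable {d c : ℕ} {lam : Fin d → ℕ}

lemma schur_centeredExp_mul_prod_sin_betaNumber_sub (hlam : Antitone lam) (θ : ℂ) :
    schur d lam (centeredExp d θ) *
      ∏ i, ∏ k ∈ Finset.Ioi i, Complex.sin ((betaNumber d 0 i - betaNumber d 0 k : ℕ) * θ) =
    ∏ i, ∏ k ∈ Finset.Ioi i, Complex.sin ((betaNumber d lam i - betaNumber d lam k : ℕ) * θ) := by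
  have hconst : ∏ i : Fin d, ∏ _j ∈ Finset.Ioi i, -2 * Complex.I ≠ 0 := by
    simp [Finset.prod_ne_zero_iff]
  have hbialternant := schur_mul_alternant d lam (centeredExp d θ)
  rw [alternant_centeredExp_of_antitone (betaNumber_strictAnti (lam := 0) antitone_const).antitone,
    alternant_centeredExp_of_antitone (betaNumber_strictAnti hlam).antitone] at hbialternant
  exact mul_left_cancel₀ hconst ((mul_left_comm _ _ _).trans hbialternant)

lemma continuous_schur (d : ℕ) (lam : Fin d → ℕ) : Continuous (schur d lam) := by
  have hHZ (k : ℤ) : Continuous fun z => HZ d z k := by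
    unfold HZ Hpoly
    split_ifs <;> fun_prop
  exact Continuous.matrix_det (continuous_matrix fun i j => hHZ _)

lemma continuous_centeredExp (d : ℕ) : Continuous (centeredExp d) := by
  unfold centeredExp
  fun_prop

lemma dense_setOf_sin_natCast_mul_ne_zero :
    Dense {θ : ℂ | ∀ m : ℕ, m ≠ 0 → Complex.sin (m * θ) ≠ 0} := by
  have hcountable : (Set.range fun p : ℤ × ℕ => (p.1 * Real.pi / p.2 : ℂ)).Countable :=
    Set.countable_range _
  refine (hcountable.dense_compl ℂ).mono ?_
  intro θ hθ m hm hsin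
  refine hθ ?_
  obtain ⟨k, hk⟩ := Complex.sin_eq_zero_iff.1 hsin
  exact ⟨(k, m), by simp [← hk, hm]⟩

theorem schur_centeredExp_mul_prod_sin_hookLen (hlam : Antitone lam) (hc : ∀ i, lam i ≤ c)
    (θ : ℂ) :
    schur d lam (centeredExp d θ) * ∏ p ∈ cells d c lam, Complex.sin (hookLen d c lam p * θ) =
      ∏ p ∈ cells d c lam, Complex.sin ((d + p.2 - p.1 : ℕ) * θ) := by
  have hschur := (continuous_schur d lam).comp (continuous_centeredExp d)
  revert θ
  refine congr_fun (Continuous.ext_on dense_setOf_sin_natCast_mul_ne_zero ?_ ?_ fun θ hθ => ?_)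
  · fun_prop
  · fun_prop
  · have hne : ∏ i, ∏ k ∈ Finset.Ioi i,
        Complex.sin ((betaNumber d 0 i - betaNumber d 0 k : ℕ) * θ) ≠ 0 := by
      refine Finset.prod_ne_zero_iff.2 fun i _ => Finset.prod_ne_zero_iff.2 fun k hk => hθ _ ?_
      exact (Nat.sub_pos_of_lt (betaNumber_strictAnti antitone_const (Finset.mem_Ioi.1 hk))).ne'
    refine mul_right_cancel₀ hne ?_
    rw [mul_right_comm, schur_centeredExp_mul_prod_sin_betaNumber_sub hlam, mul_comm]
    exact prod_hookLen_mul_prod_betaNumber_sub (fun m => Complex.sin (m * θ)) hlam hc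

lemma sin_hookLen_pos (hlam : Antitone lam) (hc : ∀ i, lam i ≤ c) {p : Fin d × Fin c}
    (hp : p ∈ cells d c lam) :
    0 < Real.sin (hookLen d c lam p * Real.pi / (c + d : ℕ)) := by
  obtain ⟨hpos, hle⟩ := Finset.mem_Ioc.1 (hookLen_mem_Ioc hlam ((Finset.mem_filter_univ p).1 hp))
  have hlt : hookLen d c lam p < c + d := by
    have := hc p.1
    simp only [betaNumber] at hle
    lia
  have hn : (0 : ℝ) < (c + d : ℕ) := by exact_mod_cast hpos.trans hlt
  apply Real.sin_pos_of_pos_of_lt_pi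
  · positivity
  · rw [div_lt_iff₀ hn, mul_comm]
    gcongr

end HookContent

theorem stmt16_general (c d n : ℕ) (lam : Fin d → ℕ) (hlam : Antitone lam)
    (hc : ∀ i, lam i ≤ c)
    (hsin : ∀ p ∈ cells d c lam, Real.sin (hookLen d c lam p * Real.pi / n) ≠ 0) :
    schur d lam (zI0 d n) =
      (((∏ p ∈ cells d c lam, Real.sin ((d + (p.2 : ℕ) - (p.1 : ℕ) : ℕ) * Real.pi / n)) /
          ∏ p ∈ cells d c lam, Real.sin (hookLen d c lam p * Real.pi / n) : ℝ) : ℂ) := by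
  have hne := Complex.ofReal_ne_zero.2 (Finset.prod_ne_zero_iff.2 hsin)
  rw [Complex.ofReal_div, eq_div_iff hne, zI0_eq_centeredExp]
  simpa [mul_div_assoc] using schur_centeredExp_mul_prod_sin_hookLen hlam hc (Real.pi / n)

/-- Hook length formula at roots of unity: for `λ ∈ Sh(d,c)` and `n = c + d`,
`S_λ(ζ^{I_0}) = ∏_{(i,j)∈λ} sin((d-i+j)π/n) / ∏_{(i,j)∈λ} sin(hl(i,j)π/n)`. -/
theorem stmt16 (c d n : ℕ) (hn : n = c + d)
    (lam : Fin d → Fin (c + 1)) (hlam : lam ∈ box d c) :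
    schur d (fun i => (lam i : ℕ)) (zI0 d n) =
      (((∏ p ∈ cells d c fun i => (lam i : ℕ),
            Real.sin ((d + (p.2 : ℕ) - (p.1 : ℕ) : ℕ) * Real.pi / n)) /
          ∏ p ∈ cells d c fun i => (lam i : ℕ),
            Real.sin ((hookLen d c (fun i => (lam i : ℕ)) p) * Real.pi / n) : ℝ) : ℂ) := by
  subst hn
  have hanti : Antitone fun i => (lam i : ℕ) := (Finset.mem_filter_univ lam).1 hlam
  have hle (i : Fin d) : (lam i : ℕ) ≤ c := (lam i).is_le
  exact stmt16_general c d _ _ hanti hle fun p hp => (sin_hookLen_pos hanti hle hp).ne'
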